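/- Achievability part of Theorem 4 (cyclic graph with 1st neighbor privacy): for every integer N ≥ 5, there exists a PIR scheme with cyclic-graph storage on N servers and privacy sets 𝒫_n = ℐ_n ∪ ℐ_{n+1} = {n−1, n, n+1} (mod N), with message length L = 2, whose download cost is D_k = 5 for every index k; hence its rate equals 2/5, so the capacity of this setting is at least 2/5. -/

import Mathlib

/-! # Achievability of rate `2/5` for the cyclic graph with first-neighbor privacy

Entropies are measured in nats, so a message of uniform bits has entropy `m log 2`, never `2`.  The
proof therefore uses biased bits, and a scheme with enough slack to absorb the entropy gained when
biased bits are added modulo `2`.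

Each message is `W_i = (a_i, b_i, c_i)`, three independent bits of entropy `2/3` nat each.  When
message `k` is retrieved,

* servers `k` and `k + 1` (that is, `n = k` or `n = k + 1`) send `(a_n, b_n ⊕ c_{n-1})`,
* server `n = k - 1` sends `(c_n, b_n ⊕ c_{n-1})`,
* server `k + 2` sends `b_{k+1}`,
* server `k + 3` sends a bit `Z` of common randomness, independent of the messages, which every
  query consists of.

The other servers send a constant.  The five servers are distinct because `5 ≤ N`.

*Decoding.*  Server `k` gives `a_k` and `b_k ⊕ c_{k-1}`, server `k - 1` gives `c_{k-1}`, and servers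
`k + 1`, `k + 2` give `b_{k+1} ⊕ c_k` and `b_{k+1}`.

*Privacy.*  Only the servers `k - 1`, `k`, `k + 1` have `k` in their privacy set, and the two forms of
answer they use are exchanged by the measure-preserving map swapping `a_n` and `c_n`, which acts
inside a single message (`swapBits`).

*Cost.*  With `h = 2/3` the entropy of a message bit and `h'` that of the sum of two such bits, the
download cost is `4 h + 3 h' + H(Z)`.  Since `2/3 ≤ h' ≤ log 2 < 7/9`, the bias of `Z` can be chosen to
make this exactly `5` (`exists_bias`).

The entropy computations rest on three facts: entropy depends only on the partition of the sample
space induced by the variable (`H_congr`), it is invariant under measure-preserving permutations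
(`H_comp_equiv`), and it is additive over variables depending on disjoint sets of bits (`H_prod`).
-/


/-!
Formalization of PIR with arbitrary privacy requirement sets.

A PIR scheme with `N` servers and `K` messages of equal length `L > 0` is modeled
by finitely-valued random variables on a common finite probability space:
messages `W 1, …, W K`, and for each server `n ∈ [1:N]` and desired index
`k ∈ [1:K]`, a query `Q n k` and an answer `A n k`.  Shannon entropy,
conditional entropy and (conditional) mutual information are defined from the
probability mass function `p`.
-/

open scoped Classical BigOperators

noncomputable section

/-- A PIR scheme: a finite probability space together with the message, query and
answer random variables.  Only the variables indexed by `n ∈ [1:N]`, `k ∈ [1:K]`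
are meaningful; all random variables are finitely valued (`ℕ`-valued on a finite
sample space). -/
structure PIRScheme (N K : ℕ) (L : ℝ) where
  /-- the sample space -/
  Ω : Type
  [fin : Fintype Ω]
  /-- the probability mass function -/
  p : Ω → ℝ
  p_nonneg : ∀ ω, 0 ≤ p ω
  p_sum : ∑ ω : Ω, p ω = 1
  /-- the messages `W i`, `i ∈ [1:K]` -/
  W : ℕ → Ω → ℕ
  /-- `Q n k` is the query sent to server `n` when retrieving message `k` -/
  Q : ℕ → ℕ → Ω → ℕ
  /-- `A n k` is the answer of server `n` when retrieving message `k` -/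
  A : ℕ → ℕ → Ω → ℕ

attribute [instance] PIRScheme.fin

namespace PIRScheme

variable {N K : ℕ} {L : ℝ} (S : PIRScheme N K L)

/-- `P[X = v]`. -/
def prob {α : Type*} (X : S.Ω → α) (v : α) : ℝ :=
  ∑ ω : S.Ω, if X ω = v then S.p ω else 0

/-- Shannon entropy `H(X)`. -/
def H {α : Type*} (X : S.Ω → α) : ℝ :=
  - ∑ ω : S.Ω, S.p ω * Real.log (S.prob X (X ω))

/-- Conditional entropy `H(X | Y) := H(X, Y) - H(Y)`. -/
def Hc {α β : Type*} (X : S.Ω → α) (Y : S.Ω → β) : ℝ :=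
  S.H (fun ω => (X ω, Y ω)) - S.H Y

/-- Mutual information `I(X ; Y) := H(X) + H(Y) - H(X, Y)`. -/
def MI {α β : Type*} (X : S.Ω → α) (Y : S.Ω → β) : ℝ :=
  S.H X + S.H Y - S.H (fun ω => (X ω, Y ω))

/-- Conditional mutual information `I(X ; Y | Z) := H(X|Z) + H(Y|Z) - H(X,Y|Z)`. -/
def MIc {α β γ : Type*} (X : S.Ω → α) (Y : S.Ω → β) (Z : S.Ω → γ) : ℝ :=
  S.Hc X Z + S.Hc Y Z - S.Hc (fun ω => (X ω, Y ω)) Z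

/-- The joint random variable `(W j)_{j ∈ T}` of a subcollection of the messages. -/
def jointW (T : Finset ℕ) : S.Ω → (T → ℕ) := fun ω j => S.W j ω

/-- The joint random variable of all `K` messages. -/
def allW : S.Ω → (Finset.Icc 1 K → ℕ) := S.jointW (Finset.Icc 1 K)

/-- `𝒬`: the tuple of all queries `Q n k`, `n ∈ [1:N]`, `k ∈ [1:K]`. -/
def allQ : S.Ω → ((Finset.Icc 1 N ×ˢ Finset.Icc 1 K : Finset (ℕ × ℕ)) → ℕ) :=
  fun ω x => S.Q x.1.1 x.1.2 ω

/-- The tuple of answers `(A 1 k, …, A N k)` when retrieving message `k`. -/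
def ansVec (k : ℕ) : S.Ω → (Finset.Icc 1 N → ℕ) := fun ω n => S.A n k ω

/-- The download cost `D k := ∑_{n=1}^N H(A n k)`. -/
def D (k : ℕ) : ℝ := ∑ n ∈ Finset.Icc 1 N, S.H (S.A n k)

/-- The rate `R := K ⬝ L / ∑_{k=1}^K D k`. -/
def rate : ℝ := (K * L) / ∑ k ∈ Finset.Icc 1 K, S.D k

/-- Validity of a PIR scheme with respect to storage index sets `I n` and privacy
requirement sets `P n`:
(messages) the messages each have entropy `L` and are mutually independent;
(i) the messages are independent of all the queries;
(ii) each answer is a function of the server's storage and received query;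
(iii) privacy: for all `θ1, θ2 ∈ P n` and every subcollection `T` of the messages,
  the answer of server `n` has the same conditional entropy whether `θ1` or `θ2`
  is being retrieved;
(iv) decodability: message `k` is determined by all the answers and the queries. -/
structure IsValid (S : PIRScheme N K L) (I P : ℕ → Finset ℕ) : Prop where
  msg_entropy : ∀ i ∈ Finset.Icc 1 K, S.H (S.W i) = L
  msg_indep : S.H S.allW = ∑ i ∈ Finset.Icc 1 K, S.H (S.W i)
  stor_sub_priv : ∀ n ∈ Finset.Icc 1 N, I n ⊆ P n
  priv_sub : ∀ n ∈ Finset.Icc 1 N, P n ⊆ Finset.Icc 1 K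
  query_indep : S.MI S.allW S.allQ = 0
  ans_det : ∀ n ∈ Finset.Icc 1 N, ∀ k ∈ Finset.Icc 1 K,
    S.Hc (S.A n k) (fun ω => (S.jointW (I n) ω, S.Q n k ω)) = 0
  privacy : ∀ n ∈ Finset.Icc 1 N, ∀ θ1 ∈ P n, ∀ θ2 ∈ P n, ∀ T ⊆ Finset.Icc 1 K,
    S.Hc (S.A n θ1) (fun ω => (S.jointW T ω, S.allQ ω)) =
      S.Hc (S.A n θ2) (fun ω => (S.jointW T ω, S.allQ ω))
  decodable : ∀ k ∈ Finset.Icc 1 K, S.Hc (S.W k) (fun ω => (S.ansVec k ω, S.allQ ω)) = 0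

end PIRScheme

/-- Path-graph storage on `N` servers (`K = N - 1` messages):
`𝒲_1 = {W 1}`, `𝒲_n = {W (n-1), W n}` for `2 ≤ n ≤ N - 1`, `𝒲_N = {W (N-1)}`. -/
def pathIndex (N : ℕ) : ℕ → Finset ℕ := fun n =>
  if n = 1 then {1} else if n = N then {N - 1} else {n - 1, n}

/-- Modified-edge-server privacy sets on the path graph:
`𝒫_1 = 𝒫_2 = {1, 2}`, `𝒫_N = 𝒫_{N-1} = {N-2, N-1}`, and `𝒫_n = {n-1, n}`
for `2 ≤ n ≤ N - 1`. -/
def pathModEdgePriv (N : ℕ) : ℕ → Finset ℕ := fun n =>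
  if n ≤ 2 then {1, 2} else if N - 1 ≤ n then {N - 2, N - 1} else {n - 1, n}

/-- The representative of `m` modulo `N` lying in `{1, …, N}` (so that index `0`
is identified with index `N`). -/
def cyc (N : ℕ) (m : ℤ) : ℕ := (((m - 1) % (N : ℤ)) + 1).toNat

/-- Cyclic-graph storage on `N` servers (`K = N` messages):
`𝒲_n = {W (n-1), W n}` with indices mod `N`, i.e. `ℐ_n = {n - 1, n} (mod N)`. -/
def cycIndex (N : ℕ) : ℕ → Finset ℕ := fun n => {cyc N ((n : ℤ) - 1), cyc N (n : ℤ)}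

/-- The cyclic interval `[a : a + len - 1]` of `len` consecutive indices mod `N`,
as a subset of `{1, …, N}`. -/
def cycInterval (N : ℕ) (a : ℤ) (len : ℕ) : Finset ℕ :=
  (Finset.range len).image fun j => cyc N (a + j)

namespace PIRScheme

/-! ### Entropy on a finite probability space -/

section general

variable {N K : ℕ} {L : ℝ} (S : PIRScheme N K L)

/-- The definition of `prob`, for an arbitrary choice of decision procedures. -/
lemma prob_eq_sum {β : Type*} (X : S.Ω → β) (v : β) [∀ ω, Decidable (X ω = v)] :
    S.prob X v = ∑ ω, if X ω = v then S.p ω else 0 := by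
  unfold prob
  congr!

/-- Entropy depends only on the partition of the sample space induced by the variable. -/
lemma H_congr {β γ : Type*} (X : S.Ω → β) (Y : S.Ω → γ)
    (h : ∀ ω ω', X ω = X ω' ↔ Y ω = Y ω') : S.H X = S.H Y := by
  unfold H prob
  simp only [h]

/-- If `X` is a function of `Y`, then `H(X | Y) = 0`. -/
lemma Hc_eq_zero {β γ : Type*} (X : S.Ω → β) (Y : S.Ω → γ)
    (h : ∀ ω ω', Y ω = Y ω' → X ω = X ω') : S.Hc X Y = 0 := by
  unfold Hc
  rw [S.H_congr (fun ω => (X ω, Y ω)) Y, sub_self]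
  intro ω ω'
  rw [Prod.mk.injEq]
  exact ⟨fun hh => hh.2, fun hh => ⟨h _ _ hh, hh⟩⟩

lemma H_const {β : Type*} (X : S.Ω → β) (h : ∀ ω ω', X ω = X ω') : S.H X = 0 := by
  unfold H prob
  have : ∀ ω, (∑ ω', if X ω' = X ω then S.p ω' else 0) = 1 := by
    intro ω
    rw [← S.p_sum]
    exact Finset.sum_congr rfl fun ω' _ => by rw [if_pos (h _ _)]
  simp [this]

lemma H_comp_equiv {β : Type*} (σ : S.Ω ≃ S.Ω) (hσ : ∀ ω, S.p (σ ω) = S.p ω) (X : S.Ω → β) :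
    S.H (fun ω => X (σ ω)) = S.H X := by
  have hp : ∀ v, S.prob (fun ω => X (σ ω)) v = S.prob X v := by
    intro v
    unfold prob
    rw [← Equiv.sum_comp σ (fun ω => if X ω = v then S.p ω else 0)]
    simp only [hσ]
  unfold H
  simp only [hp]
  rw [← Equiv.sum_comp σ (fun ω => S.p ω * Real.log (S.prob X (X ω)))]
  simp only [hσ]

lemma p_le_prob {β : Type*} (X : S.Ω → β) (ω : S.Ω) : S.p ω ≤ S.prob X (X ω) := by
  unfold prob
  have := Finset.single_le_sum (f := fun ω' => if X ω' = X ω then S.p ω' else 0)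
    (fun i _ => by split_ifs; exacts [S.p_nonneg i, le_rfl]) (Finset.mem_univ ω)
  simpa using this

lemma H_pair {β γ : Type*} (X : S.Ω → β) (Y : S.Ω → γ)
    (h : ∀ x y, S.prob (fun ω => (X ω, Y ω)) (x, y) = S.prob X x * S.prob Y y) :
    S.H (fun ω => (X ω, Y ω)) = S.H X + S.H Y := by
  unfold H
  rw [← neg_add, ← Finset.sum_add_distrib]
  congr 1
  refine Finset.sum_congr rfl fun ω _ => ?_
  rcases (S.p_nonneg ω).eq_or_lt with h0 | h0
  · simp [← h0]
  · rw [h, Real.log_mul (h0.trans_le (S.p_le_prob X ω)).ne' (h0.trans_le (S.p_le_prob Y ω)).ne',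
      mul_add]

lemma H_bool (X : S.Ω → Bool) : S.H X = Real.binEntropy (S.prob X true) := by
  have hsum : S.prob X true + S.prob X false = 1 := by
    unfold prob
    rw [← Finset.sum_add_distrib, ← S.p_sum]
    exact Finset.sum_congr rfl fun ω _ => by cases X ω <;> simp
  rw [Real.binEntropy_eq_negMulLog_add_negMulLog_one_sub, ← hsum, add_sub_cancel_left]
  unfold H Real.negMulLog
  have : ∀ ω, S.p ω * Real.log (S.prob X (X ω)) =
      (if X ω = true then S.p ω else 0) * Real.log (S.prob X true) +
      (if X ω = false then S.p ω else 0) * Real.log (S.prob X false) := by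
    intro ω
    cases X ω <;> simp
  simp only [this, Finset.sum_add_distrib, ← Finset.sum_mul]
  rw [← S.prob_eq_sum, ← S.prob_eq_sum]
  ring

end general

end PIRScheme

/-! ### The scheme -/

namespace CyclicPIR

/-- Indices of the random bits: `some (i, 0)`, `some (i, 1)`, `some (i, 2)` are the bits
`a_i`, `b_i`, `c_i` of message `i`, and `none` is the common randomness `Z`. -/
abbrev Bits (N : ℕ) : Type := Option (ZMod N × Fin 3)

/-- The Bernoulli weights: message bits have bias `α`, the bit `Z` has bias `ζ`. -/
def bias {N : ℕ} (α ζ : ℝ) (i : Bits N) (v : Bool) : ℝ :=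
  if v then i.elim ζ (fun _ => α) else 1 - i.elim ζ (fun _ => α)

/-- The answer of server `x` in terms of the offset `d = k - x` to the desired index `k`. -/
def answer {N : ℕ} (x d : ZMod N) (ω : Bits N → Bool) : ℕ :=
  if d = 0 ∨ d = -1 then
    Encodable.encode (ω (some (x, 0)), xor (ω (some (x, 1))) (ω (some (x - 1, 2))))
  else if d = 1 then
    Encodable.encode (ω (some (x, 2)), xor (ω (some (x, 1))) (ω (some (x - 1, 2))))
  else if d = -2 then Encodable.encode (ω (some (x - 1, 1)))
  else if d = -3 then Encodable.encode (ω none)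
  else 0

lemma bias_nonneg {N : ℕ} {α ζ : ℝ} (hα : α ∈ Set.Icc (0 : ℝ) 1) (hζ : ζ ∈ Set.Icc (0 : ℝ) 1)
    (i : Bits N) (v : Bool) : 0 ≤ bias α ζ i v := by
  obtain ⟨h1, h2⟩ := hα
  obtain ⟨h3, h4⟩ := hζ
  unfold bias
  cases i <;> cases v <;> simp <;> linarith

lemma bias_sum {N : ℕ} (α ζ : ℝ) (i : Bits N) : ∑ v, bias α ζ i v = 1 := by
  simp [bias]

lemma prod_bias_sum {N : ℕ} [NeZero N] (α ζ : ℝ) :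
    ∑ ω : Bits N → Bool, ∏ i, bias α ζ i (ω i) = 1 := by
  rw [← Fintype.prod_sum]
  exact Finset.prod_eq_one fun i _ => bias_sum α ζ i

/-- The scheme: the sample space consists of all bit vectors with a product measure.  It is
reducible so that functions on its sample space are recognized as functions of bit vectors. -/
abbrev scheme (N : ℕ) [NeZero N] (α ζ : ℝ) (hα : α ∈ Set.Icc (0 : ℝ) 1)
    (hζ : ζ ∈ Set.Icc (0 : ℝ) 1) : PIRScheme N N 2 where
  Ω := Bits N → Bool
  p ω := ∏ i, bias α ζ i (ω i)
  p_nonneg _ := Finset.prod_nonneg fun i _ => bias_nonneg hα hζ i _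
  p_sum := prod_bias_sum α ζ
  W i ω := Encodable.encode (ω (some ((i : ZMod N), 0)), ω (some ((i : ZMod N), 1)),
    ω (some ((i : ZMod N), 2)))
  Q _ _ ω := Encodable.encode (ω none)
  A n k ω := answer (n : ZMod N) ((k : ZMod N) - (n : ZMod N)) ω

section

variable {N : ℕ} [NeZero N] {α ζ : ℝ} {hα : α ∈ Set.Icc (0 : ℝ) 1} {hζ : ζ ∈ Set.Icc (0 : ℝ) 1}

/-! ### Additivity of entropy over disjoint sets of bits -/

/-- Variables depending on disjoint sets of bits are independent.  Both sides are written as sums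
over pairs `(ω, ω')`, which are matched by exchanging the coordinates of `ω` and `ω'` outside `I`. -/
lemma prob_prod (I : Set (Bits N)) {β γ : Type*} (X : (Bits N → Bool) → β)
    (Y : (Bits N → Bool) → γ)
    (hX : ∀ ω ω' : Bits N → Bool, (∀ i ∈ I, ω i = ω' i) → X ω = X ω')
    (hY : ∀ ω ω' : Bits N → Bool, (∀ i ∉ I, ω i = ω' i) → Y ω = Y ω') (x : β) (y : γ) :
    (scheme N α ζ hα hζ).prob (fun ω => (X ω, Y ω)) (x, y) =
      (scheme N α ζ hα hζ).prob X x * (scheme N α ζ hα hζ).prob Y y := by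
  let P : (Bits N → Bool) → ℝ := fun ω => ∏ i, bias α ζ i (ω i)
  let mix : (Bits N → Bool) → (Bits N → Bool) → (Bits N → Bool) :=
    fun ω ω' i => if i ∈ I then ω i else ω' i
  let e : (Bits N → Bool) × (Bits N → Bool) ≃ (Bits N → Bool) × (Bits N → Bool) :=
    { toFun := fun z => (mix z.1 z.2, mix z.2 z.1)
      invFun := fun z => (mix z.1 z.2, mix z.2 z.1)
      left_inv := by
        rintro ⟨a, b⟩
        ext i <;> by_cases hi : i ∈ I <;> simp [mix, hi]
      right_inv := by
        rintro ⟨a, b⟩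
        ext i <;> by_cases hi : i ∈ I <;> simp [mix, hi] }
  have hP : ∀ a b, P (mix a b) * P (mix b a) = P a * P b := by
    intro a b
    simp only [P, ← Finset.prod_mul_distrib]
    refine Finset.prod_congr rfl fun i _ => ?_
    by_cases hi : i ∈ I <;> simp [mix, hi, mul_comm]
  have hXm : ∀ a b, X (mix a b) = X a := fun a b => hX _ _ fun i hi => by simp [mix, hi]
  have hYm : ∀ a b, Y (mix a b) = Y b := fun a b => hY _ _ fun i hi => by simp [mix, hi]
  rw [PIRScheme.prob_eq_sum, PIRScheme.prob_eq_sum, PIRScheme.prob_eq_sum]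
  change (∑ ω, if (X ω, Y ω) = (x, y) then P ω else 0) =
    (∑ ω, if X ω = x then P ω else 0) * (∑ ω, if Y ω = y then P ω else 0)
  have hP1 : ∑ ω, P ω = 1 := prod_bias_sum α ζ
  rw [← mul_one (∑ ω, if (X ω, Y ω) = (x, y) then P ω else 0), ← hP1, Finset.sum_mul_sum,
    Finset.sum_mul_sum, ← Fintype.sum_prod_type', ← Fintype.sum_prod_type', ← Equiv.sum_comp e]
  refine Finset.sum_congr rfl ?_
  rintro ⟨a, b⟩ -
  simp only [e, Equiv.coe_fn_mk, hXm, hYm, Prod.mk.injEq]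
  by_cases h1 : X a = x <;> by_cases h2 : Y b = y <;> simp [h1, h2, hP]

lemma H_prod (I : Set (Bits N)) {β γ : Type*} (X : (Bits N → Bool) → β)
    (Y : (Bits N → Bool) → γ)
    (hX : ∀ ω ω' : Bits N → Bool, (∀ i ∈ I, ω i = ω' i) → X ω = X ω')
    (hY : ∀ ω ω' : Bits N → Bool, (∀ i ∉ I, ω i = ω' i) → Y ω = Y ω') :
    (scheme N α ζ hα hζ).H (fun ω => (X ω, Y ω)) =
      (scheme N α ζ hα hζ).H X + (scheme N α ζ hα hζ).H Y :=
  PIRScheme.H_pair (scheme N α ζ hα hζ) X Y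
    (prob_prod (α := α) (ζ := ζ) (hα := hα) (hζ := hζ) I X Y hX hY)

lemma prob_bit (i : Bits N) (v : Bool) :
    (scheme N α ζ hα hζ).prob (fun ω : Bits N → Bool => ω i) v = bias α ζ i v := by
  rw [PIRScheme.prob_eq_sum]
  change (∑ ω : Bits N → Bool, if ω i = v then ∏ j, bias α ζ j (ω j) else 0) = _
  -- Absorbing the indicator of `ω i = v` into the `i`-th factor keeps the summand a product.
  have h1 : ∀ ω : Bits N → Bool, (if ω i = v then ∏ j, bias α ζ j (ω j) else 0) =
      ∏ j, (if j = i then (if ω j = v then bias α ζ j (ω j) else 0) else bias α ζ j (ω j)) := by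
    intro ω
    by_cases h : ω i = v
    · rw [if_pos h]
      refine Finset.prod_congr rfl fun j _ => ?_
      by_cases hj : j = i
      · subst hj; simp [h]
      · simp [hj]
    · rw [if_neg h, Finset.prod_eq_zero (Finset.mem_univ i)]
      simp [h]
  rw [Finset.sum_congr rfl fun ω _ => h1 ω,
    ← Fintype.prod_sum (fun j (b : Bool) =>
      if j = i then (if b = v then bias α ζ j b else 0) else bias α ζ j b),
    Finset.prod_eq_single i]
  · simp
  · intro j _ hj
    simp only [hj, if_false]
    exact bias_sum α ζ j
  · simp

lemma H_bit (i : Bits N) : (scheme N α ζ hα hζ).H (fun ω : Bits N → Bool => ω i) =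
    Real.binEntropy (i.elim ζ fun _ => α) := by
  rw [PIRScheme.H_bool, prob_bit]
  simp [bias]

lemma H_xor (i j : ZMod N × Fin 3) (hij : i ≠ j) :
    (scheme N α ζ hα hζ).H (fun ω : Bits N → Bool => xor (ω (some i)) (ω (some j))) =
    Real.binEntropy (2 * α * (1 - α)) := by
  rw [PIRScheme.H_bool]
  congr 1
  have key := prob_prod (hα := hα) (hζ := hζ) {some i} (fun ω => ω (some i)) (fun ω => ω (some j))
    (fun ω ω' h => h _ rfl) (fun ω ω' h => h _ (by simpa using hij.symm))
  have hs : (scheme N α ζ hα hζ).prob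
        (fun ω : Bits N → Bool => xor (ω (some i)) (ω (some j))) true =
      (scheme N α ζ hα hζ).prob (fun ω : Bits N → Bool => (ω (some i), ω (some j))) (true, false) +
      (scheme N α ζ hα hζ).prob
        (fun ω : Bits N → Bool => (ω (some i), ω (some j))) (false, true) := by
    unfold PIRScheme.prob
    rw [← Finset.sum_add_distrib]
    refine Finset.sum_congr rfl fun ω _ => ?_
    generalize (scheme N α ζ hα hζ).p ω = q
    beta_reduce
    generalize ω (some i) = u
    generalize ω (some j) = v
    cases u <;> cases v <;> simp
  rw [hs, key, key]
  simp only [prob_bit, bias]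
  simp
  ring

/-! ### Cyclic indices -/

lemma cast_cyc (m : ℤ) : ((cyc N m : ℕ) : ZMod N) = (m : ZMod N) := by
  have hN : (0 : ℤ) < N := by exact_mod_cast Nat.pos_of_ne_zero (NeZero.ne N)
  have h0 : 0 ≤ (m - 1) % (N : ℤ) + 1 := by have := Int.emod_nonneg (m - 1) hN.ne'; omega
  have h1 : ((cyc N m : ℕ) : ℤ) = (m - 1) % (N : ℤ) + 1 := Int.toNat_of_nonneg h0
  have h2 : ((cyc N m : ℕ) : ZMod N) = (((m - 1) % (N : ℤ) + 1 : ℤ) : ZMod N) := by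
    rw [← h1]; simp
  rw [h2, Int.cast_add, ZMod.intCast_mod]
  simp

lemma cyc_mem (m : ℤ) : cyc N m ∈ Finset.Icc 1 N := by
  have hN : (0 : ℤ) < N := by exact_mod_cast Nat.pos_of_ne_zero (NeZero.ne N)
  have h0 := Int.emod_nonneg (m - 1) hN.ne'
  have h1 := Int.emod_lt_of_pos (m - 1) hN
  rw [Finset.mem_Icc]
  unfold cyc
  omega

lemma exists_rep (x : ZMod N) : ∃ n ∈ Finset.Icc 1 N, ((n : ℕ) : ZMod N) = x :=
  ⟨cyc N (x.val : ℤ), cyc_mem _, by rw [cast_cyc]; simp⟩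

omit [NeZero N] in
lemma cast_inj {a b : ℕ} (ha : a ∈ Finset.Icc 1 N) (hb : b ∈ Finset.Icc 1 N)
    (h : (a : ZMod N) = b) : a = b := by
  rw [Finset.mem_Icc] at ha hb
  have h2 := (ZMod.intCast_eq_intCast_iff_dvd_sub a b N).1 (by exact_mod_cast h)
  have h3 := Int.eq_zero_of_abs_lt_dvd h2 (by rw [abs_lt]; omega)
  omega

lemma sum_Icc (G : ZMod N → ℝ) : ∑ n ∈ Finset.Icc 1 N, G (n : ZMod N) = ∑ x, G x := by
  refine Finset.sum_bij (fun n _ => (n : ZMod N)) (fun _ _ => Finset.mem_univ _)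
    (fun a ha b hb h => cast_inj ha hb h) (fun x _ => ?_) (fun _ _ => rfl)
  obtain ⟨n, hn, h⟩ := exists_rep x
  exact ⟨n, hn, h⟩

omit [NeZero N] in
/-- In the definition of `cycInterval` the offset `j` is an integer, so the image is taken over the
copy of `Finset.range len` in `ℤ`; this restates membership with natural offsets. -/
lemma mem_cycInterval {a : ℤ} {len θ : ℕ} :
    θ ∈ cycInterval N a len ↔ ∃ j : ℕ, j < len ∧ cyc N (a + j) = θ := by
  simp [cycInterval, Finset.bind_def, Finset.pure_def]

lemma offset_of_mem {n θ : ℕ} (h : θ ∈ cycInterval N ((n : ℤ) - 1) 3) :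
    (θ : ZMod N) - n = 0 ∨ (θ : ZMod N) - n = -1 ∨ (θ : ZMod N) - n = 1 := by
  obtain ⟨j, hj, rfl⟩ := mem_cycInterval.1 h
  rw [cast_cyc]
  interval_cases j
  · right; left; push_cast; ring
  · left; push_cast; ring
  · right; right; push_cast; ring

lemma natCast_ne {N m : ℕ} (hN : 5 ≤ N) (h0 : 0 < m) (h : m < 5) : ((m : ℕ) : ZMod N) ≠ 0 := by
  rw [Ne, ZMod.natCast_eq_zero_iff]
  exact fun hd => by have := Nat.le_of_dvd h0 hd; omega

/-! ### Validity -/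

lemma W_eq_iff (i : ℕ) (ω ω' : Bits N → Bool) :
    (scheme N α ζ hα hζ).W i ω = (scheme N α ζ hα hζ).W i ω' ↔
      ∀ c, ω (some ((i : ZMod N), c)) = ω' (some ((i : ZMod N), c)) := by
  change Encodable.encode _ = Encodable.encode _ ↔ _
  rw [Encodable.encode_inj]
  simp [Fin.forall_fin_succ]

lemma H_W (i : ℕ) : (scheme N α ζ hα hζ).H ((scheme N α ζ hα hζ).W i) =
    3 * Real.binEntropy α := by
  let b : Fin 3 → (Bits N → Bool) → Bool := fun c ω => ω (some ((i : ZMod N), c))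
  rw [PIRScheme.H_congr _ _ (fun ω => (b 0 ω, b 1 ω, b 2 ω)) (fun ω ω' => by
      rw [W_eq_iff]; simp [b, Fin.forall_fin_succ]),
    H_prod {some ((i : ZMod N), 0)} (b 0) (fun ω => (b 1 ω, b 2 ω)) (fun ω ω' h => h _ rfl)
      (fun ω ω' h => Prod.ext (h _ (by simp)) (h _ (by simp))),
    H_prod {some ((i : ZMod N), 1)} (b 1) (b 2) (fun ω ω' h => h _ rfl)
      (fun ω ω' h => h _ (by simp)), H_bit, H_bit, H_bit]
  simp only [Option.elim]
  ring

lemma jointW_eq_iff (T : Finset ℕ) (ω ω' : Bits N → Bool) :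
    (scheme N α ζ hα hζ).jointW T ω = (scheme N α ζ hα hζ).jointW T ω' ↔
      ∀ i ∈ T, (scheme N α ζ hα hζ).W i ω = (scheme N α ζ hα hζ).W i ω' := by
  rw [funext_iff]
  exact ⟨fun h i hi => h ⟨i, hi⟩, fun h i => h i i.2⟩

lemma allQ_eq {ω ω' : Bits N → Bool} (h : ω none = ω' none) :
    (scheme N α ζ hα hζ).allQ ω = (scheme N α ζ hα hζ).allQ ω' := by
  funext x
  change Encodable.encode (ω none) = Encodable.encode (ω' none)
  rw [h]

lemma H_jointW (T : Finset ℕ) (hT : T ⊆ Finset.Icc 1 N) :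
    (scheme N α ζ hα hζ).H ((scheme N α ζ hα hζ).jointW T) =
      ∑ i ∈ T, (scheme N α ζ hα hζ).H ((scheme N α ζ hα hζ).W i) := by
  induction T using Finset.induction_on with
  | empty =>
    rw [Finset.sum_empty]
    exact PIRScheme.H_const _ _ fun ω ω' => (jointW_eq_iff _ ω ω').2 (by simp)
  | insert i T hi ih =>
    rw [Finset.sum_insert hi, ← ih ((Finset.subset_insert _ _).trans hT),
      PIRScheme.H_congr _ _ (fun ω => ((scheme N α ζ hα hζ).W i ω,
        (scheme N α ζ hα hζ).jointW T ω)) (fun ω ω' => by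
          rw [jointW_eq_iff, Prod.mk.injEq, jointW_eq_iff, Finset.forall_mem_insert])]
    refine H_prod {b | ∃ c, b = some ((i : ZMod N), c)} _ _ (fun ω ω' h => ?_) (fun ω ω' h => ?_)
    · exact (W_eq_iff i ω ω').2 fun c => h _ ⟨c, rfl⟩
    · refine (jointW_eq_iff T ω ω').2 fun j hj => (W_eq_iff j ω ω').2 fun c => h _ ?_
      rintro ⟨c', hc⟩
      simp only [Option.some.injEq, Prod.mk.injEq] at hc
      have := cast_inj (hT (Finset.mem_insert_of_mem hj)) (hT (Finset.mem_insert_self _ _)) hc.1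
      exact hi (this ▸ hj)

/-- Exchanging the bits `a_x` and `c_x`. -/
def swapBits (x : ZMod N) : (Bits N → Bool) ≃ (Bits N → Bool) :=
  (Equiv.swap (some (x, 0)) (some (x, 2))).arrowCongr (Equiv.refl Bool)

omit [NeZero N] in
lemma swapBits_apply (x : ZMod N) (ω : Bits N → Bool) (i : Bits N) :
    swapBits x ω i = ω (Equiv.swap (some (x, 0)) (some (x, 2)) i) := by
  simp [swapBits, Equiv.arrowCongr]

lemma p_swapBits (x : ZMod N) (ω : Bits N → Bool) :
    (scheme N α ζ hα hζ).p (swapBits x ω) = (scheme N α ζ hα hζ).p ω := by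
  change ∏ i, bias α ζ i (swapBits x ω i) = ∏ i, bias α ζ i (ω i)
  rw [← Equiv.prod_comp (Equiv.swap (some (x, 0)) (some (x, 2))) (fun i => bias α ζ i (ω i))]
  refine Finset.prod_congr rfl fun i _ => ?_
  rw [swapBits_apply]
  have : bias α ζ (Equiv.swap (some (x, 0)) (some (x, 2)) i) = bias α ζ i := by
    rw [Equiv.swap_apply_def]
    split_ifs with h1 h2
    · subst h1; rfl
    · subst h2; rfl
    · rfl
  rw [this]

lemma W_swapBits (x : ZMod N) (i : ℕ) (ω ω' : Bits N → Bool) :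
    (scheme N α ζ hα hζ).W i (swapBits x ω) = (scheme N α ζ hα hζ).W i (swapBits x ω') ↔
      (scheme N α ζ hα hζ).W i ω = (scheme N α ζ hα hζ).W i ω' := by
  rw [W_eq_iff, W_eq_iff]
  simp only [swapBits_apply, Fin.forall_fin_succ, Equiv.swap_apply_def]
  by_cases h : (i : ZMod N) = x
  · simp [h]
    tauto
  · simp [h]

/-- The conditional entropies of the answer of server `n` are the same for every index in its
privacy set as for the index `n` itself. -/
lemma privacy_aux (hN : 5 ≤ N) (n θ : ℕ) (hθ : θ ∈ cycInterval N ((n : ℤ) - 1) 3) (T : Finset ℕ) :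
    (scheme N α ζ hα hζ).Hc ((scheme N α ζ hα hζ).A n θ)
        (fun ω => ((scheme N α ζ hα hζ).jointW T ω, (scheme N α ζ hα hζ).allQ ω)) =
      (scheme N α ζ hα hζ).Hc (answer (n : ZMod N) 0)
        (fun ω => ((scheme N α ζ hα hζ).jointW T ω, (scheme N α ζ hα hζ).allQ ω)) := by
  have e1 : (1 : ZMod N) ≠ 0 := by exact_mod_cast natCast_ne hN (m := 1) (by omega) (by omega)
  have e2 : (1 : ZMod N) ≠ -1 := by
    have : (2 : ZMod N) ≠ 0 := by exact_mod_cast natCast_ne hN (m := 2) (by omega) (by omega)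
    intro h; apply this; linear_combination h
  have hA : (scheme N α ζ hα hζ).A n θ = answer (n : ZMod N) ((θ : ZMod N) - n) := rfl
  rcases offset_of_mem hθ with h | h | h
  · rw [hA, h]
  · rw [hA, h]
    congr 1
    funext ω
    simp [answer]
  · rw [hA, h]
    unfold PIRScheme.Hc
    congr 1
    rw [← PIRScheme.H_comp_equiv (scheme N α ζ hα hζ) (swapBits (n : ZMod N)) (p_swapBits _)
      (fun ω => (answer (n : ZMod N) 0 ω, (scheme N α ζ hα hζ).jointW T ω,
        (scheme N α ζ hα hζ).allQ ω))]
    refine PIRScheme.H_congr _ _ _ fun ω ω' => ?_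
    have hans : ∀ ω, answer (n : ZMod N) 0 (swapBits (n : ZMod N) ω) =
        answer (n : ZMod N) 1 ω := by
      intro ω
      simp [answer, e1, e2, swapBits_apply, Equiv.swap_apply_def]
    have hQ : ∀ ω, (scheme N α ζ hα hζ).allQ (swapBits (n : ZMod N) ω) =
        (scheme N α ζ hα hζ).allQ ω := by
      intro ω
      exact allQ_eq (by simp [swapBits_apply, Equiv.swap_apply_def])
    simp only [Prod.mk.injEq, hans, hQ]
    refine and_congr_right fun _ => and_congr_left fun _ => ?_
    erw [jointW_eq_iff, jointW_eq_iff]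
    exact forall₂_congr fun i _ => (W_swapBits _ i ω ω').symm

omit [NeZero N] in
lemma answer_congr (x d : ZMod N) {ω ω' : Bits N → Bool}
    (h1 : ∀ c, ω (some (x, c)) = ω' (some (x, c)))
    (h2 : ∀ c, ω (some (x - 1, c)) = ω' (some (x - 1, c))) (h3 : ω none = ω' none) :
    answer x d ω = answer x d ω' := by
  simp only [answer, h1, h2, h3]

omit [NeZero N] in
lemma decode (hN : 5 ≤ N) (k : ℕ) (ω ω' : Bits N → Bool)
    (h : ∀ x : ZMod N, answer x ((k : ZMod N) - x) ω = answer x ((k : ZMod N) - x) ω') :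
    ∀ c, ω (some ((k : ZMod N), c)) = ω' (some ((k : ZMod N), c)) := by
  have e1 : (1 : ZMod N) ≠ 0 := by exact_mod_cast natCast_ne hN (m := 1) (by omega) (by omega)
  have e2 : (2 : ZMod N) ≠ 0 := by exact_mod_cast natCast_ne hN (m := 2) (by omega) (by omega)
  have e3 : (3 : ZMod N) ≠ 0 := by exact_mod_cast natCast_ne hN (m := 3) (by omega) (by omega)
  have f1 : (1 : ZMod N) ≠ -1 := fun h => e2 (by linear_combination h)
  have f2 : (-2 : ZMod N) ≠ -1 := fun h => e1 (by linear_combination -h)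
  have f3 : (-2 : ZMod N) ≠ 1 := fun h => e3 (by linear_combination -h)
  have f4 : (-2 : ZMod N) ≠ 0 := fun h => e2 (by linear_combination -h)
  have h0 := h k
  have h1 := h (k - 1)
  have h2 := h (k + 1)
  have h3 := h (k + 2)
  rw [show (k : ZMod N) - k = 0 by ring] at h0
  rw [show (k : ZMod N) - (k - 1) = 1 by ring] at h1
  rw [show (k : ZMod N) - (k + 1) = -1 by ring] at h2
  rw [show (k : ZMod N) - (k + 2) = -2 by ring] at h3
  simp only [answer, true_or, or_true, if_true, Encodable.encode_inj, Prod.mk.injEq] at h0 h2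
  simp only [answer, e1, f1, or_self, if_false, if_true, Encodable.encode_inj,
    Prod.mk.injEq] at h1
  simp only [answer, f2, f3, f4, or_self, if_false, if_true, Encodable.encode_inj] at h3
  rw [show (k : ZMod N) + 2 - 1 = k + 1 by ring] at h3
  rw [add_sub_cancel_right] at h2
  obtain ⟨ha, hb⟩ := h0
  obtain ⟨-, hc⟩ := h2
  rw [h1.1, Bool.xor_left_inj] at hb
  rw [h3, Bool.xor_right_inj] at hc
  intro c
  fin_cases c
  exacts [ha, hb, hc]

lemma isValid (hN : 5 ≤ N) (hent : Real.binEntropy α = 2 / 3) :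
    (scheme N α ζ hα hζ).IsValid (cycIndex N) (fun n => cycInterval N ((n : ℤ) - 1) 3) where
  msg_entropy i _ := by rw [H_W, hent]; norm_num
  msg_indep := H_jointW _ subset_rfl
  stor_sub_priv n _ := by
    intro i hi
    simp only [cycIndex, Finset.mem_insert, Finset.mem_singleton] at hi
    refine mem_cycInterval.2 ?_
    rcases hi with rfl | rfl
    · exact ⟨0, by norm_num, by simp⟩
    · exact ⟨1, by norm_num, by simp⟩
  priv_sub n _ := by
    intro i hi
    obtain ⟨j, -, rfl⟩ := mem_cycInterval.1 hi
    exact cyc_mem _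
  query_indep := by
    unfold PIRScheme.MI
    have := H_prod (hα := hα) (hζ := hζ) {b | b ≠ none} (scheme N α ζ hα hζ).allW
      (scheme N α ζ hα hζ).allQ
      (fun ω ω' h => (jointW_eq_iff _ ω ω').2 fun j _ => (W_eq_iff j ω ω').2 fun c =>
        h _ (by simp)) (fun ω ω' h => allQ_eq (h _ (by simp)))
    erw [this]
    ring
  ans_det n _ k _ := by
    refine PIRScheme.Hc_eq_zero _ _ _ fun ω ω' h => ?_
    rw [Prod.mk.injEq] at h
    have hW := (jointW_eq_iff _ ω ω').1 h.1
    have hq : ω none = ω' none := Encodable.encode_injective h.2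
    have c1 := (W_eq_iff _ ω ω').1 (hW (cyc N (n : ℤ)) (by simp [cycIndex]))
    have c2 := (W_eq_iff _ ω ω').1 (hW (cyc N ((n : ℤ) - 1)) (by simp [cycIndex]))
    simp only [cast_cyc] at c1 c2
    push_cast at c1 c2
    exact answer_congr _ _ c1 c2 hq
  privacy n _ θ1 h1 θ2 h2 T _ := by
    rw [privacy_aux hN n θ1 h1, privacy_aux hN n θ2 h2]
  decodable k _ := by
    refine PIRScheme.Hc_eq_zero _ _ _ fun ω ω' h => ?_
    rw [Prod.mk.injEq] at h
    refine (W_eq_iff k ω ω').2 (decode hN k ω ω' fun x => ?_)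
    obtain ⟨n, hn, rfl⟩ := exists_rep x
    exact congrFun h.1 ⟨n, hn⟩

/-! ### Download cost -/

/-- The entropy of a pair `(w, u ⊕ v)` of a raw bit and a sum of two further bits. -/
lemma H_raw_xor (x y z : ZMod N × Fin 3) (hxy : x ≠ y) (hxz : x ≠ z) (hyz : y ≠ z) :
    (scheme N α ζ hα hζ).H (fun ω : Bits N → Bool =>
      Encodable.encode (ω (some x), xor (ω (some y)) (ω (some z)))) =
      Real.binEntropy α + Real.binEntropy (2 * α * (1 - α)) := by
  rw [PIRScheme.H_congr _ _ (fun ω : Bits N → Bool => (ω (some x), xor (ω (some y)) (ω (some z))))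
    (fun ω ω' => by rw [Encodable.encode_inj]),
    H_prod {some x} _ (fun ω => xor (ω (some y)) (ω (some z))) (fun ω ω' h => h _ rfl)
      (fun ω ω' h => by
        rw [h (some y) (by simpa using hxy.symm), h (some z) (by simpa using hxz.symm)]),
    H_bit, H_xor _ _ hyz]
  simp

/-- The entropy of an answer, as a sum of indicators of its offset `d`; at most one of them is
nonzero because the five offsets are distinct modulo `N ≥ 5`. -/
lemma H_answer (hN : 5 ≤ N) (x d : ZMod N) :
    (scheme N α ζ hα hζ).H (answer x d) =
      (if d = 0 then Real.binEntropy α + Real.binEntropy (2 * α * (1 - α)) else 0) +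
      (if d = -1 then Real.binEntropy α + Real.binEntropy (2 * α * (1 - α)) else 0) +
      (if d = 1 then Real.binEntropy α + Real.binEntropy (2 * α * (1 - α)) else 0) +
      (if d = -2 then Real.binEntropy α else 0) + (if d = -3 then Real.binEntropy ζ else 0) := by
  have e1 : (1 : ZMod N) ≠ 0 := by exact_mod_cast natCast_ne hN (m := 1) (by omega) (by omega)
  have e2 : (2 : ZMod N) ≠ 0 := by exact_mod_cast natCast_ne hN (m := 2) (by omega) (by omega)
  have e3 : (3 : ZMod N) ≠ 0 := by exact_mod_cast natCast_ne hN (m := 3) (by omega) (by omega)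
  have e4 : (4 : ZMod N) ≠ 0 := by exact_mod_cast natCast_ne hN (m := 4) (by omega) (by omega)
  have f1 : (1 : ZMod N) ≠ -1 := fun h => e2 (by linear_combination h)
  have f2 : (-2 : ZMod N) ≠ -1 := fun h => e1 (by linear_combination -h)
  have f3 : (-2 : ZMod N) ≠ 1 := fun h => e3 (by linear_combination -h)
  have f4 : (-2 : ZMod N) ≠ 0 := fun h => e2 (by linear_combination -h)
  have f5 : (-3 : ZMod N) ≠ 0 := fun h => e3 (by linear_combination -h)
  have f6 : (-3 : ZMod N) ≠ -1 := fun h => e2 (by linear_combination -h)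
  have f7 : (-3 : ZMod N) ≠ 1 := fun h => e4 (by linear_combination -h)
  have f8 : (-3 : ZMod N) ≠ -2 := fun h => e1 (by linear_combination -h)
  have f9 : (-1 : ZMod N) ≠ 0 := fun h => e1 (by linear_combination -h)
  have g1 : x ≠ x - 1 := fun h => e1 (by linear_combination h)
  have t0 := H_raw_xor (hα := hα) (hζ := hζ) (x, 0) (x, 1) (x - 1, 2) (by simp) (by simp) (by simp)
  have t1 := H_raw_xor (hα := hα) (hζ := hζ) (x, 2) (x, 1) (x - 1, 2) (by simp)
    (fun h => g1 (congrArg Prod.fst h)) (by simp)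
  have tb : ∀ i : Bits N, (scheme N α ζ hα hζ).H (fun ω : Bits N → Bool =>
      Encodable.encode (ω i)) = Real.binEntropy (i.elim ζ fun _ => α) := fun i => by
    rw [← H_bit (hα := hα) (hζ := hζ) i]
    exact PIRScheme.H_congr _ _ _ fun ω ω' => Encodable.encode_inj
  by_cases d0 : d = 0
  · subst d0
    have : answer x 0 = fun ω => Encodable.encode
        (ω (some (x, 0)), xor (ω (some (x, 1))) (ω (some (x - 1, 2)))) := by
      funext ω; simp [answer]
    rw [this]
    refine t0.trans ?_
    simp [e1.symm, f4.symm, f5.symm, f9.symm]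
  by_cases d1 : d = -1
  · subst d1
    have : answer x (-1) = fun ω => Encodable.encode
        (ω (some (x, 0)), xor (ω (some (x, 1))) (ω (some (x - 1, 2)))) := by
      funext ω; simp [answer]
    rw [this]
    refine t0.trans ?_
    rw [if_neg d0, if_pos rfl, if_neg f1.symm, if_neg f2.symm, if_neg f6.symm]
    ring
  by_cases d2 : d = 1
  · subst d2
    have : answer x 1 = fun ω => Encodable.encode
        (ω (some (x, 2)), xor (ω (some (x, 1))) (ω (some (x - 1, 2)))) := by
      funext ω; simp [answer, d0, d1]
    rw [this]
    refine t1.trans ?_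
    rw [if_neg d0, if_neg d1, if_pos rfl, if_neg f3.symm, if_neg f7.symm]
    ring
  by_cases d3 : d = -2
  · subst d3
    have : answer x (-2) = fun ω => Encodable.encode (ω (some (x - 1, 1))) := by
      funext ω; simp only [answer, d0, d1, d2, or_self, if_false, if_true]
    rw [this]
    refine (tb _).trans ?_
    rw [if_neg d0, if_neg d1, if_neg d2, if_pos rfl, if_neg f8.symm]
    simp
  by_cases d4 : d = -3
  · subst d4
    have : answer x (-3) = fun ω => Encodable.encode (ω none) := by
      funext ω; simp only [answer, d0, d1, d2, d3, or_self, if_false, if_true]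
    rw [this]
    refine (tb _).trans ?_
    rw [if_neg d0, if_neg d1, if_neg d2, if_neg d3, if_pos rfl]
    simp
  · simp only [d0, d1, d2, d3, d4, if_false, add_zero]
    exact PIRScheme.H_const _ _ fun ω ω' => by simp [answer, d0, d1, d2, d3, d4]

lemma D_eq (hN : 5 ≤ N) (k : ℕ) : (scheme N α ζ hα hζ).D k =
    4 * Real.binEntropy α + 3 * Real.binEntropy (2 * α * (1 - α)) + Real.binEntropy ζ := by
  have h : (scheme N α ζ hα hζ).D k = ∑ x : ZMod N,
      (scheme N α ζ hα hζ).H (answer x ((k : ZMod N) - x)) :=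
    sum_Icc fun x => (scheme N α ζ hα hζ).H (answer x ((k : ZMod N) - x))
  rw [h]
  simp only [H_answer hN]
  rw [← Equiv.sum_comp (Equiv.subLeft (k : ZMod N))]
  simp only [Equiv.subLeft_apply, sub_sub_cancel, Finset.sum_add_distrib, Finset.sum_ite_eq',
    Finset.mem_univ, if_true]
  ring

end

/-! ### Choice of the biases -/

lemma exists_binEntropy_eq {h : ℝ} (h0 : 0 ≤ h) (h1 : h ≤ Real.log 2) :
    ∃ α ∈ Set.Icc (0 : ℝ) (1 / 2), Real.binEntropy α = h := by
  have := intermediate_value_Icc (show (0 : ℝ) ≤ 1 / 2 by norm_num)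
    (Real.binEntropy_continuous.continuousOn (s := Set.Icc (0 : ℝ) (1 / 2)))
  refine this ⟨by simpa using h0, ?_⟩
  rw [one_div, Real.binEntropy_two_inv]
  exact h1

/-- Message bits of entropy `2/3`, and a bias of `Z` that makes up for the part of the download
cost `5` that the message bits do not use. -/
lemma exists_bias : ∃ α ∈ Set.Icc (0 : ℝ) 1, ∃ ζ ∈ Set.Icc (0 : ℝ) 1, Real.binEntropy α = 2 / 3 ∧
    4 * Real.binEntropy α + 3 * Real.binEntropy (2 * α * (1 - α)) + Real.binEntropy ζ = 5 := by
  have l1 := Real.log_two_gt_d9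
  have l2 := Real.log_two_lt_d9
  obtain ⟨α, ⟨hα0, hα1⟩, hα⟩ := exists_binEntropy_eq (h := 2 / 3) (by norm_num) (by linarith)
  have hle : Real.binEntropy (2 * α * (1 - α)) ≤ Real.log 2 := Real.binEntropy_le_log_two
  -- `α ≤ 2 α (1 - α) ≤ 1/2`, and the binary entropy increases on `[0, 1/2]`.
  have hge : 2 / 3 ≤ Real.binEntropy (2 * α * (1 - α)) := by
    rw [← hα]
    refine Real.binEntropy_strictMonoOn.monotoneOn ?_ ?_ ?_
    · constructor <;> linarith
    · constructor <;> nlinarith [sq_nonneg (2 * α - 1)]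
    · nlinarith
  obtain ⟨ζ, ⟨hζ0, hζ1⟩, hζ⟩ := exists_binEntropy_eq
    (h := 7 / 3 - 3 * Real.binEntropy (2 * α * (1 - α))) (by linarith) (by linarith)
  refine ⟨α, ⟨hα0, by linarith⟩, ζ, ⟨hζ0, by linarith⟩, hα, ?_⟩
  rw [hζ, hα]
  ring

end CyclicPIR

/-- **Achievability part of Theorem 4** (cyclic graph with 1st neighbor privacy):
for every `N ≥ 5`, there is a PIR scheme with cyclic-graph storage on `N` servers,
privacy sets `𝒫_n = ℐ_n ∪ ℐ_{n+1} = {n-1, n, n+1} (mod N)`, message length `L = 2`,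
and download cost `D k = 5` for every index `k`; hence its rate equals `2/5`, so the
capacity of this setting is at least `2/5`. -/
theorem cyclic_firstNeighbor_achievability (N : ℕ) (hN : 5 ≤ N) :
    ∃ S : PIRScheme N N 2,
      S.IsValid (cycIndex N) (fun n => cycInterval N ((n : ℤ) - 1) 3) ∧
      (∀ k ∈ Finset.Icc 1 N, S.D k = 5) ∧
      S.rate = 2 / 5 := by
  have : NeZero N := ⟨by omega⟩
  obtain ⟨α, hα, ζ, hζ, hent, hcost⟩ := CyclicPIR.exists_bias
  have hD : ∀ k, (CyclicPIR.scheme N α ζ hα hζ).D k = 5 := fun k => by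
    rw [CyclicPIR.D_eq hN, hcost]
  refine ⟨CyclicPIR.scheme N α ζ hα hζ, CyclicPIR.isValid hN hent, fun k _ => hD k, ?_⟩
  have hN0 : (N : ℝ) ≠ 0 := Nat.cast_ne_zero.2 (NeZero.ne N)
  simp only [PIRScheme.rate, hD, Finset.sum_const, Nat.card_Icc, nsmul_eq_mul,
    Nat.add_sub_cancel]
  field_simp
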